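/- Let f : 𝔽₂ⁿ → {1,−1} be a Boolean function with Fourier sparsity s ≥ 1, let γ₁,…,γ_d be linearly independent linear forms with 𝔽₂-span H, and let l be the number of cosets of H in the dual space of 𝔽₂ⁿ that have nonempty intersection with Supp(f̂). Then there exists b ∈ 𝔽₂^d such that the restriction of f to the affine subspace V_b = {x : γ₁(x)=b₁,…,γ_d(x)=b_d} has Fourier sparsity at least l²/s. -/

import Mathlib

/-!
Every coset `C` of `H` contributes the function `g_C(x) = ∑_{γ ∈ C} f̂(γ) (-1)^(γ x)`. Restricting
`f` to `V_b` merges the characters of a coset into a single one, so for `x ∈ V_b` the value `g_C(x)`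
is, with the parametrization based at `x`, the Fourier coefficient of the restriction attached to
`C` (`fCoeff_restrict`). The uncertainty principle (`uncertainty`) says that a nonzero `g_C` is
nonzero on at least `2ⁿ / |C ∩ Supp f̂|` points. Summing over the `l` cosets meeting the support,
Cauchy-Schwarz gives `∑_C |supp g_C| ≥ 2ⁿ l² / s`, so some `x` has `g_C(x) ≠ 0` for at least
`l² / s` cosets, and `b = (γ₁ x, …, γ_d x)` works.

Cosets of `H` are encoded as linear forms on `𝔽₂^(n-d)`: if `L` parametrizes the common kernel of
the `γᵢ`, then `γ ↦ γ ∘ L` has kernel `H`, and so identifies the cosets with its values.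
-/


/-- The dual space of `𝔽₂ⁿ`: linear forms `𝔽₂ⁿ → 𝔽₂`. -/
abbrev DualF (n : ℕ) : Type := (Fin n → ZMod 2) →ₗ[ZMod 2] ZMod 2

/-- A Boolean function takes values in `{1, -1} ⊆ ℝ`. -/
def IsBooleanFn (n : ℕ) (f : (Fin n → ZMod 2) → ℝ) : Prop :=
  ∀ x, f x = 1 ∨ f x = -1

/-- Fourier coefficient `f̂(γ) = 2⁻ⁿ Σ_x f(x) (-1)^(γ x)`. -/
noncomputable def fCoeff (n : ℕ) (f : (Fin n → ZMod 2) → ℝ) (γ : DualF n) : ℝ :=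
  (2 ^ n : ℝ)⁻¹ * ∑ x : Fin n → ZMod 2, f x * (-1 : ℝ) ^ (γ x).val

/-- Fourier support. -/
noncomputable def fSupp (n : ℕ) (f : (Fin n → ZMod 2) → ℝ) : Set (DualF n) :=
  {γ | fCoeff n f γ ≠ 0}

/-- Fourier sparsity. -/
noncomputable def fSpar (n : ℕ) (f : (Fin n → ZMod 2) → ℝ) : ℕ :=
  (fSupp n f).ncard

/-- Fourier dimension: dimension of the 𝔽₂-span of the Fourier support. -/
noncomputable def fDim (n : ℕ) (f : (Fin n → ZMod 2) → ℝ) : ℕ :=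
  Module.finrank (ZMod 2) (Submodule.span (ZMod 2) (fSupp n f))

/-- `P` is an (injective) affine-linear parametrization of the affine subspace
`{x : γ₁ x = b₁, …, γ_d x = b_d}` by `𝔽₂^(n-d)`. -/
def IsAffineParam (n d : ℕ) (γ : Fin d → DualF n) (b : Fin d → ZMod 2)
    (P : (Fin (n - d) → ZMod 2) → (Fin n → ZMod 2)) : Prop :=
  (∃ (L : (Fin (n - d) → ZMod 2) →ₗ[ZMod 2] (Fin n → ZMod 2)) (x₀ : Fin n → ZMod 2),
      P = fun y => x₀ + L y) ∧
  Function.Injective P ∧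
  Set.range P = {x | ∀ i, γ i x = b i}

open Finset

/-- The nontrivial additive character `a ↦ (-1)^a` of `𝔽₂`. -/
noncomputable def sgn (a : ZMod 2) : ℝ := (-1 : ℝ) ^ a.val

lemma sgn_zero : sgn 0 = 1 := by simp [sgn]

lemma sgn_add (a b : ZMod 2) : sgn (a + b) = sgn a * sgn b := by
  have h2 : (1 + 1 : ZMod 2) = 0 := by decide
  have h1 : (1 : ZMod 2).val = 1 := by decide
  have ha : a = 0 ∨ a = 1 := by revert a; decide
  have hb : b = 0 ∨ b = 1 := by revert b; decide
  rcases ha with rfl | rfl <;> rcases hb with rfl | rfl <;> simp [sgn, h2, h1]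

lemma sgn_mul_self (a : ZMod 2) : sgn a * sgn a = 1 := by
  rw [← sgn_add, CharTwo.add_self_eq_zero, sgn_zero]

lemma abs_sgn (a : ZMod 2) : |sgn a| = 1 := by simp [sgn]

lemma sgn_eq_neg_one {a : ZMod 2} (ha : a ≠ 0) : sgn a = -1 := by
  have h : a = 1 := by revert a; decide
  have h1 : (1 : ZMod 2).val = 1 := by decide
  simp [h, sgn, h1]

/-- Orthogonality of characters, for any finite `𝔽₂`-space: a nontrivial character sums to zero. -/
lemma sum_sgn_eq_zero {E : Type*} [AddCommGroup E] [Module (ZMod 2) E] [Fintype E]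
    (φ : E →ₗ[ZMod 2] ZMod 2) {v : E} (hv : φ v ≠ 0) : ∑ x, sgn (φ x) = 0 := by
  have h : ∑ x, sgn (φ (x + v)) = ∑ x, sgn (φ x) :=
    Equiv.sum_comp (Equiv.addRight v) (fun x => sgn (φ x))
  simp only [map_add, sgn_add, sgn_eq_neg_one hv, ← Finset.sum_mul] at h
  linarith

noncomputable instance dualFFintype (n : ℕ) : Fintype (DualF n) :=
  haveI : Finite (DualF n) := Module.finite_of_finite (ZMod 2)
  Fintype.ofFinite _

lemma card_space (n : ℕ) : Fintype.card (Fin n → ZMod 2) = 2 ^ n := by simp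

lemma card_dualF (n : ℕ) : Fintype.card (DualF n) = 2 ^ n := by
  rw [Module.card_eq_pow_finrank (K := ZMod 2) (V := DualF n), ZMod.card]
  congr 1
  exact (Subspace.dual_finrank_eq (K := ZMod 2) (V := Fin n → ZMod 2)).trans (by simp)

open Classical in
lemma sum_sgn_mul_sgn (n : ℕ) (α β : DualF n) :
    ∑ x, sgn (α x) * sgn (β x) = if α = β then (2 ^ n : ℝ) else 0 := by
  split_ifs with h
  · subst h
    simp [sgn_mul_self]
  · have h' : ∃ v, (α + β) v ≠ 0 := by
      by_contra! hc
      refine h (LinearMap.ext fun v => ?_)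
      have := hc v
      rwa [LinearMap.add_apply, CharTwo.add_eq_zero] at this
    obtain ⟨v, hv⟩ := h'
    simpa [sgn_add] using sum_sgn_eq_zero (α + β) hv

open Classical in
lemma sum_dual_sgn (n : ℕ) (x y : Fin n → ZMod 2) :
    ∑ α : DualF n, sgn (α x) * sgn (α y) = if x = y then (2 ^ n : ℝ) else 0 := by
  split_ifs with h
  · subst h
    simp only [sgn_mul_self, sum_const, card_univ, card_dualF]
    simp
  · obtain ⟨i, hi⟩ := Function.ne_iff.mp h
    have := sum_sgn_eq_zero (E := DualF n)
      (LinearMap.applyₗ (R := ZMod 2) (M₂ := ZMod 2) (x + y)) (v := LinearMap.proj i) (by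
        simpa [CharTwo.add_eq_zero] using hi)
    simpa [sgn_add] using this

lemma fourier_inversion (n : ℕ) (f : (Fin n → ZMod 2) → ℝ) (x : Fin n → ZMod 2) :
    f x = ∑ α : DualF n, fCoeff n f α * sgn (α x) := by
  classical
  have h : ∑ α : DualF n, fCoeff n f α * sgn (α x)
      = (2 ^ n : ℝ)⁻¹ * ∑ y, f y * ∑ α : DualF n, sgn (α y) * sgn (α x) := by
    simp only [fCoeff, Finset.mul_sum, Finset.sum_mul]
    rw [Finset.sum_comm]
    refine sum_congr rfl fun y _ => sum_congr rfl fun α _ => ?_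
    simp only [sgn]
    ring
  rw [h]
  simp only [sum_dual_sgn]
  simp [mul_comm]

/-- Uncertainty principle: a nonzero combination of the characters in `S` is nonzero on at least
`2ⁿ / |S|` points. -/
lemma uncertainty (n : ℕ) (S : Finset (DualF n)) (c : DualF n → ℝ)
    {α : DualF n} (hα : α ∈ S) (hc : c α ≠ 0) :
    (2 ^ n : ℝ) ≤ #S * #{x | ∑ β ∈ S, c β * sgn (β x) ≠ 0} := by
  classical
  set g : (Fin n → ZMod 2) → ℝ := fun x => ∑ β ∈ S, c β * sgn (β x) with hg
  set N : ℝ := ((#{x | g x ≠ 0} : ℕ) : ℝ) with hN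
  obtain ⟨x₀, -, hx₀⟩ := Finset.exists_max_image univ (fun x => |g x|) univ_nonempty
  have hsum : ∑ x, |g x| ≤ N * |g x₀| := by
    have : ∑ x, |g x| = ∑ x with g x ≠ 0, |g x| := by
      rw [Finset.sum_filter]
      refine sum_congr rfl fun x _ => ?_
      split_ifs with h
      · rfl
      · simpa using h
    rw [this, hN, ← nsmul_eq_mul]
    exact Finset.sum_le_card_nsmul _ _ _ fun x _ => hx₀ x (mem_univ x)
  have hcoef : ∀ β ∈ S, ∑ x, g x * sgn (β x) = 2 ^ n * c β := by
    intro β hβ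
    have : ∑ x, g x * sgn (β x) = ∑ τ ∈ S, c τ * ∑ x, sgn (τ x) * sgn (β x) := by
      simp only [hg, Finset.sum_mul, Finset.mul_sum]
      rw [Finset.sum_comm]
      simp only [mul_assoc]
    rw [this]
    simp only [sum_sgn_mul_sgn]
    simp [hβ, mul_comm]
  have hle : ∀ β ∈ S, 2 ^ n * |c β| ≤ N * |g x₀| := by
    intro β hβ
    refine le_trans ?_ hsum
    have h := congrArg abs (hcoef β hβ)
    rw [abs_mul, abs_of_pos (by positivity : (0 : ℝ) < 2 ^ n)] at h
    rw [← h]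
    refine (Finset.abs_sum_le_sum_abs _ _).trans_eq ?_
    simp [abs_mul, abs_sgn]
  have hM : 0 < |g x₀| := by
    have h1 : 0 < 2 ^ n * |c α| := by positivity
    have h2 := h1.trans_le (hle α hα)
    by_contra h0
    have h3 : |g x₀| = 0 := le_antisymm (not_lt.mp h0) (abs_nonneg _)
    simp [h3] at h2
  have hup : |g x₀| ≤ ∑ β ∈ S, |c β| := by
    refine (Finset.abs_sum_le_sum_abs _ _).trans_eq ?_
    simp [abs_mul, abs_sgn]
  have hfin : 2 ^ n * |g x₀| ≤ #S * N * |g x₀| := by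
    calc 2 ^ n * |g x₀| ≤ 2 ^ n * ∑ β ∈ S, |c β| := by gcongr
      _ = ∑ β ∈ S, 2 ^ n * |c β| := Finset.mul_sum _ _ _
      _ ≤ #S • (N * |g x₀|) := Finset.sum_le_card_nsmul _ _ _ hle
      _ = #S * N * |g x₀| := by rw [nsmul_eq_mul, mul_assoc]
  exact le_of_mul_le_mul_right hfin hM

open Classical in
/-- The Fourier coefficient at `δ` of the restriction of `f` to `x + range L` collects all forms
`α` that agree with `δ` along `L`. -/
lemma fCoeff_restrict (n m : ℕ) (f : (Fin n → ZMod 2) → ℝ)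
    (L : (Fin m → ZMod 2) →ₗ[ZMod 2] (Fin n → ZMod 2)) (x : Fin n → ZMod 2) (δ : DualF m) :
    fCoeff m (f ∘ fun y => x + L y) δ
      = ∑ α : DualF n with fCoeff n f α ≠ 0 ∧ α ∘ₗ L = δ, fCoeff n f α * sgn (α x) := by
  have h : fCoeff m (f ∘ fun y => x + L y) δ
      = (2 ^ m : ℝ)⁻¹ * ∑ α : DualF n, (fCoeff n f α * sgn (α x)) *
          ∑ y, sgn ((α ∘ₗ L) y) * sgn (δ y) := by
    rw [fCoeff]
    congr 1
    simp only [Finset.mul_sum]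
    rw [Finset.sum_comm]
    refine sum_congr rfl fun y _ => ?_
    rw [Function.comp_apply, fourier_inversion n f, Finset.sum_mul]
    refine sum_congr rfl fun α _ => ?_
    rw [map_add, sgn_add, LinearMap.comp_apply]
    simp only [sgn]
    ring
  rw [h]
  simp only [sum_sgn_mul_sgn]
  rw [Finset.mul_sum, Finset.sum_filter]
  refine sum_congr rfl fun α _ => ?_
  by_cases h1 : α ∘ₗ L = δ <;> by_cases h2 : fCoeff n f α = 0 <;> simp [h1, h2]
  field_simp

/-- The common kernel of `d` independent forms is parametrized by `𝔽₂^(n-d)`, and the forms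
vanishing on it are exactly those in their span. -/
lemma exists_param (n d : ℕ) (γ : Fin d → DualF n) (hγ : LinearIndependent (ZMod 2) γ) :
    ∃ L : (Fin (n - d) → ZMod 2) →ₗ[ZMod 2] (Fin n → ZMod 2), Function.Injective L ∧
      (∀ v, v ∈ LinearMap.range L ↔ ∀ i, γ i v = 0) ∧
      ∀ α : DualF n, α ∘ₗ L = 0 → α ∈ Submodule.span (ZMod 2) (Set.range γ) := by
  set H : Submodule (ZMod 2) (DualF n) := Submodule.span (ZMod 2) (Set.range γ) with hH
  set V : Submodule (ZMod 2) (Fin n → ZMod 2) := H.dualCoannihilator with hV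
  have hrank : Module.finrank (ZMod 2) V = n - d := by
    have h1 : Module.finrank (ZMod 2) H = d := by
      rw [hH, finrank_span_eq_card hγ, Fintype.card_fin]
    have h2 := Subspace.finrank_add_finrank_dualCoannihilator_eq H
    rw [h1, Module.finrank_fin_fun] at h2
    exact Nat.eq_sub_of_add_eq' h2
  have hmem : ∀ v, v ∈ V ↔ ∀ i, γ i v = 0 := by
    intro v
    rw [hV, Submodule.mem_dualCoannihilator]
    constructor
    · exact fun h i => h _ (Submodule.subset_span ⟨i, rfl⟩)
    · intro h φ hφ
      induction hφ using Submodule.span_induction with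
      | mem φ hφ => obtain ⟨i, rfl⟩ := hφ; exact h i
      | zero => simp
      | add a b _ _ ha hb => simp [ha, hb]
      | smul c a _ ha => simp [ha]
  have e : (Fin (n - d) → ZMod 2) ≃ₗ[ZMod 2] V :=
    LinearEquiv.ofFinrankEq _ _ (by rw [hrank, Module.finrank_fin_fun])
  have hr : LinearMap.range (V.subtype ∘ₗ e.toLinearMap) = V := by
    rw [LinearMap.range_comp, LinearEquiv.range, Submodule.map_top, Submodule.range_subtype]
  refine ⟨V.subtype ∘ₗ e.toLinearMap, ?_, ?_, ?_⟩
  · exact V.injective_subtype.comp e.injective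
  · intro v
    rw [hr, hmem]
  · intro α hα
    have h1 : α ∈ V.dualAnnihilator := by
      rw [Submodule.mem_dualAnnihilator]
      intro v hv
      rw [← hr] at hv
      obtain ⟨y, rfl⟩ := hv
      exact LinearMap.congr_fun hα y
    rwa [hV, Subspace.dualCoannihilator_dualAnnihilator_eq] at h1

/-- If `f` has Fourier sparsity `s ≥ 1`, `γ₁, …, γ_d` are linearly independent forms
with span `H`, and `l` is the number of cosets of `H` meeting the Fourier support of
`f`, then there is a `b` such that the restriction of `f` to
`V_b = {x : ∀ i, γᵢ x = bᵢ}` has Fourier sparsity at least `l²/s`. -/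
theorem exists_restriction_with_large_sparsity (n d : ℕ) (f : (Fin n → ZMod 2) → ℝ)
    (hf : IsBooleanFn n f) (s : ℕ) (hs : s = fSpar n f) (hs1 : 1 ≤ s)
    (γ : Fin d → DualF n) (hγ : LinearIndependent (ZMod 2) γ)
    (H : Submodule (ZMod 2) (DualF n)) (hH : H = Submodule.span (ZMod 2) (Set.range γ))
    (l : ℕ)
    (hl : l = Set.ncard ((Submodule.Quotient.mk : DualF n → DualF n ⧸ H) '' fSupp n f)) :
    ∃ (b : Fin d → ZMod 2) (P : (Fin (n - d) → ZMod 2) → (Fin n → ZMod 2)),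
      IsAffineParam n d γ b P ∧
      ((l : ℝ) ^ 2 / s ≤ (fSpar (n - d) (f ∘ P) : ℝ)) := by
  classical
  subst hH
  obtain ⟨L, hLinj, hLrange, hLker⟩ := exists_param n d γ hγ
  set S : Finset (DualF n) := {α | fCoeff n f α ≠ 0} with hS
  have hsupp : fSupp n f = (S : Set (DualF n)) := by ext α; simp [fSupp, hS]
  have hsS : s = #S := by rw [hs, fSpar, hsupp, Set.ncard_coe_finset]
  set T : DualF n → DualF (n - d) := fun α => α ∘ₗ L with hT
  set A : Finset (DualF (n - d)) := S.image T with hA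
  -- A coset of `H` is determined by the common value of `T` on it, so `l ≤ |A|`.
  have hlA : l ≤ #A := by
    have hex : ∀ δ ∈ A, ∃ α ∈ S, T α = δ := fun δ hδ => Finset.mem_image.mp hδ
    choose! r hr hrT using hex
    have hsub : (Submodule.Quotient.mk : DualF n → DualF n ⧸ Submodule.span (ZMod 2)
        (Set.range γ)) '' fSupp n f ⊆ (fun δ => Submodule.Quotient.mk (r δ)) '' (A : Set _) := by
      rintro _ ⟨α, hα, rfl⟩
      rw [hsupp, Finset.mem_coe] at hα
      have hTα : T α ∈ A := Finset.mem_image_of_mem T hα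
      refine ⟨T α, hTα, ?_⟩
      refine (Submodule.Quotient.eq _).mpr (hLker _ ?_)
      have := hrT _ hTα
      rw [LinearMap.sub_comp]
      exact sub_eq_zero.mpr this
    calc l ≤ _ := hl.le.trans (Set.ncard_le_ncard hsub (Set.toFinite _))
      _ ≤ (A : Set (DualF (n - d))).ncard := Set.ncard_image_le (Set.toFinite _)
      _ = #A := Set.ncard_coe_finset A
  set Sf : DualF (n - d) → Finset (DualF n) :=
    fun δ => {α | fCoeff n f α ≠ 0 ∧ α ∘ₗ L = δ} with hSf
  set g : DualF (n - d) → (Fin n → ZMod 2) → ℝ :=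
    fun δ x => ∑ α ∈ Sf δ, fCoeff n f α * sgn (α x) with hg
  have hunc : ∀ δ ∈ A, (1 : ℝ) ^ 2 ≤ #(Sf δ) * (#{x | g δ x ≠ 0} / 2 ^ n) := by
    intro δ hδ
    obtain ⟨α, hα, rfl⟩ := Finset.mem_image.mp hδ
    have hα' : fCoeff n f α ≠ 0 := by simpa [hS] using hα
    have h := uncertainty n (Sf (T α)) (fCoeff n f) (α := α) (by simp [hSf, hT, hα']) hα'
    rw [one_pow, ← mul_div_assoc, le_div_iff₀ (by positivity), one_mul]
    exact h
  have hsum : ∑ δ ∈ A, (#(Sf δ) : ℝ) = s := by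
    rw [hsS, Finset.card_eq_sum_card_image T S, Nat.cast_sum]
    refine sum_congr rfl fun δ _ => ?_
    rw [hS, Finset.filter_filter]
  have hCS := Finset.sum_sq_le_sum_mul_sum_of_sq_le_mul A (r := fun _ => (1 : ℝ))
    (f := fun δ => (#(Sf δ) : ℝ)) (g := fun δ => (#{x | g δ x ≠ 0} / 2 ^ n : ℝ))
    (fun _ _ => by positivity) (fun _ _ => by positivity) hunc
  rw [hsum, Finset.sum_const, nsmul_eq_mul, mul_one, ← Finset.sum_div] at hCS
  have hs0 : (0 : ℝ) < s := by exact_mod_cast hs1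
  have hswap : ∑ δ ∈ A, (#{x | g δ x ≠ 0} : ℝ)
      = ∑ x : Fin n → ZMod 2, (#{δ ∈ A | g δ x ≠ 0} : ℝ) := by
    exact_mod_cast Finset.sum_card_bipartiteAbove_eq_sum_card_bipartiteBelow
      (s := A) (t := univ) (fun δ x => g δ x ≠ 0)
  have hx : ∃ x : Fin n → ZMod 2, (l : ℝ) ^ 2 / s ≤ #{δ ∈ A | g δ x ≠ 0} := by
    by_contra! hc
    have h1 : ∑ x : Fin n → ZMod 2, (#{δ ∈ A | g δ x ≠ 0} : ℝ) < 2 ^ n * ((l : ℝ) ^ 2 / s) := by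
      refine (Finset.sum_lt_sum_of_nonempty univ_nonempty fun x _ => hc x).trans_eq ?_
      rw [Finset.sum_const, card_univ, card_space, nsmul_eq_mul]
      push_cast
      ring
    rw [← hswap] at h1
    have h2 : (l : ℝ) ^ 2 ≤ (#A : ℝ) ^ 2 := by gcongr
    have h3 : (∑ δ ∈ A, (#{x | g δ x ≠ 0} : ℝ)) / 2 ^ n < (l : ℝ) ^ 2 / s := by
      rw [div_lt_iff₀ (by positivity)]
      linarith
    have h4 := mul_lt_mul_of_pos_left h3 hs0
    rw [mul_div_cancel₀ _ hs0.ne'] at h4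
    linarith
  obtain ⟨x, hx⟩ := hx
  refine ⟨fun i => γ i x, fun y => x + L y, ⟨⟨L, x, rfl⟩, ?_, ?_⟩, hx.trans ?_⟩
  · exact fun y z h => hLinj (add_left_cancel h)
  · ext v
    constructor
    · rintro ⟨y, rfl⟩ i
      simp [(hLrange (L y)).mp ⟨y, rfl⟩ i]
    · intro hv
      obtain ⟨y, hy⟩ := (hLrange (v - x)).mpr fun i => by rw [map_sub, hv i, sub_self]
      exact ⟨y, by simp [hy]⟩
  · rw [fSpar]
    norm_cast
    rw [← Set.ncard_coe_finset]
    refine Set.ncard_le_ncard (fun δ hδ => ?_) (Set.toFinite _)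
    have hδ' : g δ x ≠ 0 := by
      rw [Finset.mem_coe, Finset.mem_filter] at hδ
      exact hδ.2
    show fCoeff (n - d) _ δ ≠ 0
    rw [fCoeff_restrict]
    exact hδ'
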